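/- Fix n ≥ 1, a partition λ, and N ≥ 1, and let nλ denote the partition (nλ_1, nλ_2, …). Then for every composition α, the number of semistandard n-ribbon tableaux of shape nλ, weight α, and spin 0 equals the number of semistandard Young tableaux of shape λ and weight α; equivalently, setting q = 0 gives 𝒢_{nλ}(x_1,…,x_N;0) = s_λ(x_1,…,x_N). -/

import Mathlib

/-!
A ribbon of spin `0` lies in a single row, so it is a horizontal segment of `n` cells. In a
tableau of spin `0` every ribbon is of this kind; hence, going up the chain from the empty
partition, every row of every diagram has length divisible by `n` (`dvd_start`), each diagram
of the chain is of the form `nν`, and each strip `nν'/nν` has only one such tiling, namely the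
one by the blocks into which the cells of `ν'/ν` are stretched (`spin_zero_tiling`). The northern
condition on this tiling says exactly that `ν'/ν` is an ordinary horizontal strip
(`northernCond_block`).

So for every `n ≥ 1`, spin-zero `n`-ribbon tableaux of shape `nλ` correspond, preserving weights,
to chains of partitions from `∅` to `λ` with horizontal strips as differences
(`HChain.toTableau`). The case `n = 1`, where all spins vanish, describes the semistandard Young
tableaux of shape `λ` by the same chains. For the identity of polynomials, evaluation at `q = 0`
retains exactly the terms of spin `0`.
-/

open scoped Classical

noncomputable section

/-- A cell of a Young/skew diagram: (row, column). -/
abbrev Cell : Type := ℕ × ℕ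

/-- Two cells are adjacent if they share an edge. -/
def Adj (a b : Cell) : Prop :=
  (a.1 = b.1 ∧ (a.2 + 1 = b.2 ∨ b.2 + 1 = a.2)) ∨
  (a.2 = b.2 ∧ (a.1 + 1 = b.1 ∨ b.1 + 1 = a.1))

/-- Reachability inside a finite set of cells via edge-adjacency. -/
def Reach (S : Finset Cell) (a b : Cell) : Prop :=
  Relation.ReflTransGen (fun x y => y ∈ S ∧ Adj x y) a b

/-- A set of cells is connected if any two of its cells are joined by a path inside it. -/
def CellsConnected (S : Finset Cell) : Prop :=
  ∀ a ∈ S, ∀ b ∈ S, Reach S a b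

/-- The connected component of the cell `c` inside `S`. -/
def component (S : Finset Cell) (c : Cell) : Finset Cell :=
  S.filter (fun d => Reach S c d)

/-- The number of connected components of a set of cells. -/
def numComponents (S : Finset Cell) : ℕ :=
  (S.image (fun c => component S c)).card

/-- `S` contains no 2 × 2 square of cells. -/
def NoSquare (S : Finset Cell) : Prop :=
  ¬ ∃ i j : ℕ, (i, j) ∈ S ∧ (i + 1, j) ∈ S ∧ (i, j + 1) ∈ S ∧ (i + 1, j + 1) ∈ S

/-- `S` is (the set of cells of) a skew shape `λ/μ`. -/
def IsSkewCells (S : Finset Cell) : Prop :=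
  ∃ lam mu : YoungDiagram, mu ≤ lam ∧ S = lam.cells \ mu.cells

/-- An `n`-ribbon: a connected skew shape with `n` cells and no 2 × 2 square. -/
def IsRibbon (n : ℕ) (S : Finset Cell) : Prop :=
  S.card = n ∧ CellsConnected S ∧ NoSquare S ∧ IsSkewCells S

/-- The spin of a ribbon: the number of rows it occupies, minus 1. -/
def ribbonSpin (S : Finset Cell) : ℕ := (S.image Prod.fst).card - 1

/-- `T` is a tiling of the cell set `S` by `n`-ribbons. -/
def IsTilingOf (n : ℕ) (S : Finset Cell) (T : Finset (Finset Cell)) : Prop :=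
  (∀ R ∈ T, IsRibbon n R) ∧
  ((T : Set (Finset Cell)).Pairwise fun A B => Disjoint A B) ∧
  T.biUnion id = S

/-- `S` can be tiled by `n`-ribbons. -/
def Tileable (n : ℕ) (S : Finset Cell) : Prop := ∃ T, IsTilingOf n S T

/-- Total spin of a tiling. -/
def tilingSpin (T : Finset (Finset Cell)) : ℕ := ∑ R ∈ T, ribbonSpin R

/-- The maximum spin of an `n`-ribbon tiling of `S`. -/
def maxSpin (n : ℕ) (S : Finset Cell) : ℕ :=
  sSup {m : ℕ | ∃ T, IsTilingOf n S T ∧ tilingSpin T = m}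

/-- `c` is the topright-most cell of `R`: maximal column and, among those, minimal row. -/
def TopRightCell (R : Finset Cell) (c : Cell) : Prop :=
  c ∈ R ∧ ∀ d ∈ R, d.2 ≤ c.2 ∧ (d.2 = c.2 → c.1 ≤ d.1)

/-- Every ribbon of the tiling `T` has its topright-most cell touching the northern
edge of the shape `S`: the cell directly above it is not in `S`. -/
def NorthernCond (S : Finset Cell) (T : Finset (Finset Cell)) : Prop :=
  ∀ R ∈ T, ∀ c : Cell, TopRightCell R c → (c.1 = 0 ∨ (c.1 - 1, c.2) ∉ S)

/-- `T` is a tiling of `S` witnessing that `S` is a horizontal `n`-ribbon strip. -/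
def IsHStripTiling (n : ℕ) (S : Finset Cell) (T : Finset (Finset Cell)) : Prop :=
  IsTilingOf n S T ∧ NorthernCond S T

/-- `S` is a horizontal `n`-ribbon strip. -/
def IsHStripCells (n : ℕ) (S : Finset Cell) : Prop :=
  IsSkewCells S ∧ ∃ T, IsHStripTiling n S T

/-- The spin of a horizontal `n`-ribbon strip (via its tiling, which is unique when it exists). -/
def stripSpin (n : ℕ) (S : Finset Cell) : ℕ :=
  if h : ∃ T, IsHStripTiling n S T then tilingSpin h.choose else 0

/-- Conjugate (transpose) of a set of cells. -/
def swapCells (S : Finset Cell) : Finset Cell := S.image Prod.swap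

/-- `S` is a vertical `n`-ribbon strip: its conjugate is a horizontal one. -/
def IsVStripCells (n : ℕ) (S : Finset Cell) : Prop :=
  IsHStripCells n (swapCells S)

/-- The spin of a vertical `n`-ribbon strip with `k = |S|/n` ribbons:
`k (n-1)` minus the spin of the conjugate strip. -/
def vStripSpin (n : ℕ) (S : Finset Cell) : ℕ :=
  (S.card / n) * (n - 1) - stripSpin n (swapCells S)

/-- `T` is a tiling of `S` witnessing that `S` is a vertical `n`-ribbon strip. -/
def IsVStripTiling (n : ℕ) (S : Finset Cell) (T : Finset (Finset Cell)) : Prop :=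
  IsHStripTiling n (swapCells S) (T.image swapCells)

/-- `mu` is obtained from `lam` by removing a single `n`-ribbon. -/
def RibbonStep (n : ℕ) (lam mu : YoungDiagram) : Prop :=
  mu ≤ lam ∧ IsRibbon n (lam.cells \ mu.cells)

/-- `delta` is the `n`-core of `lam`: it is obtained from `lam` by successively removing
`n`-ribbons, and no further `n`-ribbon can be removed from it. -/
def IsNCoreOf (n : ℕ) (delta lam : YoungDiagram) : Prop :=
  Relation.ReflTransGen (RibbonStep n) lam delta ∧ ∀ mu, ¬ RibbonStep n delta mu

/-- The `n`-core of a partition (defined via choice; it exists and is unique). -/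
def nCore (n : ℕ) (lam : YoungDiagram) : YoungDiagram :=
  if h : ∃ d, IsNCoreOf n d lam then h.choose else lam

/-- A semistandard `n`-ribbon tableau of shape `lam/mu` with entries in `{1, …, N}`:
a chain of partitions `mu = μ⁰ ⊆ μ¹ ⊆ ⋯ ⊆ μᴺ = lam` where each `μⁱ/μ^{i-1}` is a (possibly
empty) horizontal `n`-ribbon strip, together with the (unique) tiling of each strip. -/
structure RibbonTableau (n N : ℕ) (lam mu : YoungDiagram) where
  chain : Fin (N + 1) → YoungDiagram
  chain_zero : chain 0 = mu
  chain_last : chain (Fin.last N) = lam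
  chain_mono : ∀ i : Fin N, chain i.castSucc ≤ chain i.succ
  tiling : Fin N → Finset (Finset Cell)
  tiling_strip : ∀ i : Fin N,
    IsHStripTiling n ((chain i.succ).cells \ (chain i.castSucc).cells) (tiling i)

/-- The spin of a ribbon tableau. -/
def RibbonTableau.spin {n N : ℕ} {lam mu : YoungDiagram} (T : RibbonTableau n N lam mu) : ℕ :=
  ∑ i : Fin N, tilingSpin (T.tiling i)

/-- A standard ribbon tableau: each letter occurs exactly once. -/
def RibbonTableau.IsStandard {n N : ℕ} {lam mu : YoungDiagram}
    (T : RibbonTableau n N lam mu) : Prop :=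
  ∀ i : Fin N, (T.tiling i).card = 1

/-- The monomial `q^{spin T} x^{weight T}` attached to a ribbon tableau. -/
def tableauTerm {n N : ℕ} {lam mu : YoungDiagram} (T : RibbonTableau n N lam mu) :
    MvPolynomial (Fin N) (Polynomial ℤ) :=
  MvPolynomial.C (Polynomial.X ^ T.spin) *
    ∏ i : Fin N, MvPolynomial.X i ^ (T.tiling i).card

/-- The ribbon function `𝒢_{lam/mu}(x₁, …, x_N; q)`. -/
def ribbonFn (n N : ℕ) (lam mu : YoungDiagram) : MvPolynomial (Fin N) (Polynomial ℤ) :=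
  ∑ᶠ T : RibbonTableau n N lam mu, tableauTerm T

/-- `𝒢_lam = 𝒢_{lam/(n-core of lam)}`. -/
def G (n N : ℕ) (lam : YoungDiagram) : MvPolynomial (Fin N) (Polynomial ℤ) :=
  ribbonFn n N lam (nCore n lam)

/-- The Schur polynomial `s_ν(x₁,…,x_N)`, realized as the `n = 1` ribbon function
(1-ribbon tableaux are exactly semistandard Young tableaux, and all spins are 0). -/
def schurPoly (N : ℕ) (nu : YoungDiagram) : MvPolynomial (Fin N) (Polynomial ℤ) :=
  ribbonFn 1 N nu ⊥

/-- The cells of the `i`-th horizontal strip of a decomposition. -/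
def stripCells {len : ℕ} (strip : Fin len → Finset (Finset Cell)) (i : Fin len) : Finset Cell :=
  (strip i).biUnion id

/-- The cells of `lam` together with the strips up to (and including) `i`. -/
def partialCells {len : ℕ} (strip : Fin len → Finset (Finset Cell)) (lam : YoungDiagram)
    (i : Fin len) : Finset Cell :=
  lam.cells ∪ (Finset.univ.filter (fun j => j ≤ i)).biUnion (fun j => stripCells strip j)

/-- The union of the cells of the strips strictly before `i`. -/
def prevCells {len : ℕ} (strip : Fin len → Finset (Finset Cell)) (i : Fin len) : Finset Cell :=
  (Finset.univ.filter (fun j => j < i)).biUnion (fun j => stripCells strip j)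

/-- Two cell sets touch if some cell of one is adjacent to some cell of the other. -/
def Touches (A B : Finset Cell) : Prop :=
  ∃ a ∈ A, ∃ b ∈ B, Adj a b

/-- `R` is the rightmost ribbon within the cell set `C`. -/
def IsRightmostIn (R C : Finset Cell) : Prop :=
  ∃ c ∈ R, ∀ d ∈ C, d.2 ≤ c.2

/-- A border `n`-ribbon strip of shape `mu/lam`: the connected skew shape `mu/lam` with a
distinguished decomposition into disjoint non-empty horizontal `n`-ribbon strips
`T₁, …, T_len` (each recorded by its tiling) such that each partial union is a skew shape,
`T₁` is connected, and for `i ≥ 2` every connected component `C` of `Tᵢ` is such that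
`C ∪ (T₁ ∪ ⋯ ∪ T_{i-1})` is not a horizontal `n`-ribbon strip and only the rightmost
ribbon of `C` touches `T₁ ∪ ⋯ ∪ T_{i-1}`. -/
structure BorderRibbonStrip (n : ℕ) (lam mu : YoungDiagram) where
  len : ℕ
  len_pos : 1 ≤ len
  strip : Fin len → Finset (Finset Cell)
  sub : lam ≤ mu
  connected : CellsConnected (mu.cells \ lam.cells)
  nonempty : ∀ i, (strip i).Nonempty
  disj : ∀ i j, i ≠ j → Disjoint (stripCells strip i) (stripCells strip j)
  cover : Finset.univ.biUnion (fun i => stripCells strip i) = mu.cells \ lam.cells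
  shape : ∀ i, ∃ nu : YoungDiagram, nu.cells = partialCells strip lam i
  hstrips : ∀ i, IsHStripTiling n (stripCells strip i) (strip i)
  first_connected : CellsConnected (stripCells strip ⟨0, len_pos⟩)
  comp_cond : ∀ i : Fin len, 0 < (i : ℕ) → ∀ c ∈ stripCells strip i,
    (¬ IsHStripCells n (component (stripCells strip i) c ∪ prevCells strip i)) ∧
    (∀ R ∈ strip i, R ⊆ component (stripCells strip i) c →
      Touches R (prevCells strip i) → IsRightmostIn R (component (stripCells strip i) c))

/-- The height of a border ribbon strip: total number of connected components of its
horizontal strips, minus 1. -/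
def BorderRibbonStrip.height {n : ℕ} {lam mu : YoungDiagram}
    (S : BorderRibbonStrip n lam mu) : ℕ :=
  (∑ i : Fin S.len, numComponents (stripCells S.strip i)) - 1

/-- The spin of a border ribbon strip. -/
def BorderRibbonStrip.spin {n : ℕ} {lam mu : YoungDiagram}
    (S : BorderRibbonStrip n lam mu) : ℕ :=
  ∑ i : Fin S.len, tilingSpin (S.strip i)

/-- The size (number of ribbons) of a border ribbon strip. -/
def BorderRibbonStrip.size {n : ℕ} {lam mu : YoungDiagram}
    (S : BorderRibbonStrip n lam mu) : ℕ :=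
  ∑ i : Fin S.len, (S.strip i).card

/-- `𝒳^{mu/lam}_k(q) = Σ_S (-1)^{h(S)} q^{s(S)}` over border `n`-ribbon strips of shape
`mu/lam` with `k` ribbons. -/
def chiX (n k : ℕ) (lam mu : YoungDiagram) : Polynomial ℤ :=
  ∑ᶠ S : BorderRibbonStrip n lam mu,
    if S.size = k then (-1) ^ S.height * Polynomial.X ^ S.spin else 0

/-- The complete homogeneous symmetric polynomial of degree `k` evaluated at the family `v`. -/
def hPoly {ι R : Type*} [Fintype ι] [DecidableEq ι] [CommSemiring R] (k : ℕ) (v : ι → R) : R :=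
  ∑ d : Sym ι k, ((d : Multiset ι).map v).prod

/-- The elementary symmetric polynomial of degree `k` evaluated at the family `v`. -/
def ePoly {ι R : Type*} [Fintype ι] [DecidableEq ι] [CommSemiring R] (k : ℕ) (v : ι → R) : R :=
  ∑ s ∈ Finset.univ.powersetCard k, ∏ i ∈ s, v i

/-- The alphabet `A_q(x) = {q^{2j} x_i : 1 ≤ i ≤ N, 0 ≤ j ≤ n-1}`. -/
def alphabetVal (n N : ℕ) : Fin N × Fin n → MvPolynomial (Fin N) (Polynomial ℤ) :=
  fun p => MvPolynomial.C (Polynomial.X ^ (2 * (p.2 : ℕ))) * MvPolynomial.X p.1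

/-- The Schur function `s_lam` evaluated at the alphabet `A_q(x)`,
i.e. the plethysm `s_lam[(1+q²+⋯+q^{2n-2})X]` in `N` variables. -/
def schurAlph (n N : ℕ) (lam : YoungDiagram) : MvPolynomial (Fin N) (Polynomial ℤ) :=
  MvPolynomial.aeval
    (fun t : Fin (n * N) => alphabetVal n N (Prod.swap (finProdFinEquiv.symm t)))
    (schurPoly (n * N) lam)

end

noncomputable section

/-! ### Row segments and blocks -/

/-- The horizontal `n`-ribbon starting at column `a` of row `r`. -/
def rowSeg (n r a : ℕ) : Finset Cell := (Finset.range n).image fun j => (r, a + j)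

lemma mem_rowSeg {n r a : ℕ} {c : Cell} :
    c ∈ rowSeg n r a ↔ c.1 = r ∧ a ≤ c.2 ∧ c.2 < a + n := by
  obtain ⟨x, y⟩ := c
  simp only [rowSeg, Finset.mem_image, Finset.mem_range, Prod.mk.injEq]
  constructor
  · rintro ⟨j, hj, rfl, rfl⟩
    omega
  · rintro ⟨rfl, h1, h2⟩
    exact ⟨y - a, by omega, rfl, by omega⟩

/-- The block of `n` cells into which the cell `c` is stretched. -/
def block (n : ℕ) (c : Cell) : Finset Cell := rowSeg n c.1 (n * c.2)

lemma div_eq_iff_block {n k y : ℕ} (hn : 1 ≤ n) : (n * k ≤ y ∧ y < n * k + n) ↔ y / n = k := by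
  constructor
  · rintro ⟨h1, h2⟩
    exact Nat.div_eq_of_lt_le (by rwa [mul_comm]) (by rw [add_mul, mul_comm k n]; omega)
  · rintro rfl
    exact ⟨Nat.mul_div_le y n, Nat.lt_mul_div_succ y (by omega)⟩

lemma mem_block {n : ℕ} (hn : 1 ≤ n) {c d : Cell} :
    d ∈ block n c ↔ (d.1, d.2 / n) = c := by
  rw [block, mem_rowSeg, div_eq_iff_block hn, Prod.ext_iff]

lemma block_injective {n : ℕ} (hn : 1 ≤ n) : Function.Injective (block n) := by
  intro c d h
  have h1 : (c.1, n * c.2) ∈ block n d := by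
    rw [← h, mem_block hn]
    simp [Nat.mul_div_cancel_left _ (show 0 < n by omega)]
  rw [mem_block hn] at h1
  simpa [Nat.mul_div_cancel_left _ (show 0 < n by omega)] using h1

/-! ### Stretching and contracting Young diagrams -/

/-- The partition `nν`, for `n ≥ 1`. -/
def stretch (n : ℕ) (hn : 1 ≤ n) (ν : YoungDiagram) : YoungDiagram where
  cells := ν.cells.biUnion (block n)
  isLowerSet := by
    intro c d hdc hc
    simp only [Finset.coe_biUnion, Set.mem_iUnion, Finset.mem_coe, mem_block hn,
      YoungDiagram.mem_cells, exists_prop, exists_eq_right'] at hc ⊢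
    exact ν.isLowerSet (show (d.1, d.2 / n) ≤ (c.1, c.2 / n) from
      ⟨hdc.1, Nat.div_le_div_right hdc.2⟩) hc

lemma mem_stretch {n : ℕ} (hn : 1 ≤ n) {ν : YoungDiagram} {c : Cell} :
    c ∈ stretch n hn ν ↔ (c.1, c.2 / n) ∈ ν := by
  rw [← YoungDiagram.mem_cells]
  simp [stretch, mem_block hn]

lemma mul_mem_stretch {n : ℕ} (hn : 1 ≤ n) {ν : YoungDiagram} {r k : ℕ} :
    (r, n * k) ∈ stretch n hn ν ↔ (r, k) ∈ ν := by
  simp [mem_stretch, Nat.mul_div_cancel_left _ (show 0 < n by omega)]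

lemma stretch_injective {n : ℕ} (hn : 1 ≤ n) : Function.Injective (stretch n hn) := by
  intro μ ν h
  ext ⟨r, k⟩
  rw [YoungDiagram.mem_cells, YoungDiagram.mem_cells, ← mul_mem_stretch hn, h, mul_mem_stretch hn]

lemma stretch_mono {n : ℕ} (hn : 1 ≤ n) {μ ν : YoungDiagram} (h : μ ≤ ν) :
    stretch n hn μ ≤ stretch n hn ν := by
  intro c hc
  rw [mem_stretch] at hc ⊢
  exact h hc

lemma le_of_stretch_le {n : ℕ} (hn : 1 ≤ n) {μ ν : YoungDiagram}
    (h : stretch n hn μ ≤ stretch n hn ν) : μ ≤ ν := by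
  rintro ⟨r, k⟩ hc
  exact (mul_mem_stretch hn).1 (h ((mul_mem_stretch hn).2 hc))

lemma stretch_bot {n : ℕ} (hn : 1 ≤ n) : stretch n hn ⊥ = ⊥ := by
  ext c
  simp [mem_stretch, YoungDiagram.mem_cells]

lemma stretch_one (ν : YoungDiagram) : stretch 1 le_rfl ν = ν := by
  ext c
  simp [mem_stretch, YoungDiagram.mem_cells]

/-- The diagram whose `r`-th row is `⌈μ_r / n⌉`, for `n ≥ 1`; a left inverse of `stretch`. -/
def contract (n : ℕ) (μ : YoungDiagram) : YoungDiagram where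
  cells := μ.cells.image fun c => (c.1, c.2 / n)
  isLowerSet := by
    rintro ⟨a, b⟩ ⟨r, k⟩ hdc hc
    simp only [Finset.coe_image, Set.mem_image, Finset.mem_coe, YoungDiagram.mem_cells,
      Prod.mk.injEq, Prod.exists] at hc ⊢
    obtain ⟨x, y, hxy, rfl, rfl⟩ := hc
    have h1 : r ≤ x := hdc.1
    have h2 : k ≤ y / n := hdc.2
    rcases Nat.eq_zero_or_pos n with rfl | hn
    · exact ⟨r, y, μ.up_left_mem h1 le_rfl hxy, rfl, by simp at h2 ⊢; omega⟩
    · refine ⟨r, n * k, μ.up_left_mem h1 ?_ hxy, rfl, Nat.mul_div_cancel_left _ hn⟩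
      calc n * k ≤ n * (y / n) := Nat.mul_le_mul_left n h2
        _ ≤ y := Nat.mul_div_le y n

lemma mem_contract {n : ℕ} (hn : 1 ≤ n) {μ : YoungDiagram} {r k : ℕ} :
    (r, k) ∈ contract n μ ↔ (r, n * k) ∈ μ := by
  rw [← YoungDiagram.mem_cells]
  simp only [contract, Finset.mem_image, YoungDiagram.mem_cells, Prod.mk.injEq, Prod.exists]
  constructor
  · rintro ⟨x, y, h, rfl, rfl⟩
    exact μ.up_left_mem le_rfl (Nat.mul_div_le y n) h
  · intro h
    exact ⟨r, n * k, h, rfl, Nat.mul_div_cancel_left _ hn⟩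

/-! ### Ribbons of spin zero -/

lemma isSkewCells_rowSeg (n r a : ℕ) : IsSkewCells (rowSeg n r a) := by
  let big : YoungDiagram :=
    { cells := Finset.range (r + 1) ×ˢ Finset.range (a + n)
      isLowerSet := by
        rintro ⟨x, y⟩ ⟨x', y'⟩ h hc
        have h1 : x' ≤ x := h.1
        have h2 : y' ≤ y := h.2
        simp only [Finset.mem_coe, Finset.mem_product, Finset.mem_range] at hc ⊢
        omega }
  let small : YoungDiagram :=
    { cells := (Finset.range (r + 1) ×ˢ Finset.range (a + n)).filter fun c => c.1 < r ∨ c.2 < a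
      isLowerSet := by
        rintro ⟨x, y⟩ ⟨x', y'⟩ h hc
        have h1 : x' ≤ x := h.1
        have h2 : y' ≤ y := h.2
        simp only [Finset.mem_coe, Finset.mem_product, Finset.mem_range, Finset.mem_filter] at hc ⊢
        omega }
  refine ⟨big, small, Finset.filter_subset _ _, ?_⟩
  ext ⟨x, y⟩
  simp only [mem_rowSeg, big, small, Finset.mem_sdiff, Finset.mem_product, Finset.mem_range,
    Finset.mem_filter]
  omega

lemma reach_rowSeg_right {n r a j : ℕ} (k : ℕ) (hk : j + k < n) :
    Reach (rowSeg n r a) (r, a + j) (r, a + j + k) := by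
  induction k with
  | zero => exact Relation.ReflTransGen.refl
  | succ k ih =>
    refine (ih (by omega)).tail ⟨mem_rowSeg.2 ⟨rfl, ?_, ?_⟩, Or.inl ⟨rfl, Or.inl rfl⟩⟩
    · change a ≤ a + j + (k + 1)
      omega
    · change a + j + (k + 1) < a + n
      omega

lemma reach_rowSeg_left {n r a j : ℕ} (k : ℕ) (hk : j + k < n) :
    Reach (rowSeg n r a) (r, a + j + k) (r, a + j) := by
  induction k with
  | zero => exact Relation.ReflTransGen.refl
  | succ k ih =>
    refine Relation.ReflTransGen.head (b := (r, a + j + k)) ⟨mem_rowSeg.2 ⟨rfl, ?_, ?_⟩, Or.inl ⟨rfl, Or.inr rfl⟩⟩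
      (ih (by omega))
    · change a ≤ a + j + k
      omega
    · change a + j + k < a + n
      omega

lemma card_rowSeg (n r a : ℕ) : (rowSeg n r a).card = n := by
  rw [rowSeg, Finset.card_image_of_injective, Finset.card_range]
  intro x y h
  simpa using h

lemma isRibbon_rowSeg (n r a : ℕ) : IsRibbon n (rowSeg n r a) := by
  refine ⟨card_rowSeg n r a, ?_, ?_, isSkewCells_rowSeg n r a⟩
  · rintro ⟨x, y⟩ hc ⟨x', y'⟩ hd
    obtain ⟨rfl, h1, h2⟩ := mem_rowSeg.1 hc
    obtain ⟨rfl, h3, h4⟩ := mem_rowSeg.1 hd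
    simp only at h1 h2 h3 h4 ⊢
    obtain ⟨j, rfl⟩ := Nat.exists_eq_add_of_le h1
    obtain ⟨j', rfl⟩ := Nat.exists_eq_add_of_le h3
    rcases le_total j j' with h | h
    · obtain ⟨k, rfl⟩ := Nat.exists_eq_add_of_le h
      rw [← add_assoc]
      exact reach_rowSeg_right k (by omega)
    · obtain ⟨k, rfl⟩ := Nat.exists_eq_add_of_le h
      rw [← add_assoc]
      exact reach_rowSeg_left k (by omega)
  · rintro ⟨i, j, h1, h2, -, -⟩
    have h1 := (mem_rowSeg.1 h1).1
    have h2 := (mem_rowSeg.1 h2).1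
    simp only at h1 h2
    omega

lemma ribbonSpin_rowSeg (n r a : ℕ) : ribbonSpin (rowSeg n r a) = 0 := by
  have h : (rowSeg n r a).image Prod.fst ⊆ {r} := by
    intro x hx
    obtain ⟨c, hc, rfl⟩ := Finset.mem_image.1 hx
    simpa using (mem_rowSeg.1 hc).1
  have := Finset.card_le_card h
  rw [Finset.card_singleton] at this
  rw [ribbonSpin]
  omega

/-- A skew shape is convex along rows, so a ribbon occupying a single row is a segment. -/
lemma eq_rowSeg_of_spin_zero {n : ℕ} (hn : 1 ≤ n) {R : Finset Cell} (hR : IsRibbon n R)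
    (h0 : ribbonSpin R = 0) : ∃ r a, R = rowSeg n r a := by
  obtain ⟨hcard, -, -, big, small, -, hskew⟩ := hR
  have hne : R.Nonempty := Finset.card_pos.1 (by omega)
  obtain ⟨c, hc, hmin⟩ := Finset.exists_min_image R Prod.snd hne
  obtain ⟨d, hd, hmax⟩ := Finset.exists_max_image R Prod.snd hne
  have hrow : ∀ x ∈ R, x.1 = c.1 := fun x hx =>
    Finset.card_le_one.1 (by rw [ribbonSpin] at h0; omega) _ (Finset.mem_image_of_mem _ hx) _
      (Finset.mem_image_of_mem _ hc)
  have hseg : R = rowSeg (d.2 + 1 - c.2) c.1 c.2 := by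
    ext ⟨x, y⟩
    rw [mem_rowSeg]
    have hcd := hmin d hd
    constructor
    · intro hx
      have h1 := hmin _ hx
      have h2 := hmax _ hx
      exact ⟨hrow _ hx, h1, by simp only at h1 h2 ⊢; omega⟩
    · rintro ⟨rfl, h1, h2⟩
      simp only at h1 h2
      have hdrow := hrow d hd
      rw [hskew, Finset.mem_sdiff, YoungDiagram.mem_cells, YoungDiagram.mem_cells] at hc hd ⊢
      exact ⟨big.up_left_mem hdrow.ge (by omega) hd.1,
        fun h => hc.2 (small.up_left_mem le_rfl h1 h)⟩
  have : d.2 + 1 - c.2 = n := by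
    rw [← hcard, hseg, card_rowSeg]
  exact ⟨c.1, c.2, by rw [← this]; exact hseg⟩

/-- A topright-most cell of a row segment is its last cell. -/
lemma topRightCell_rowSeg {n r a : ℕ} (hn : 1 ≤ n) {c : Cell} :
    TopRightCell (rowSeg n r a) c ↔ c = (r, a + (n - 1)) := by
  constructor
  · rintro ⟨hc, h⟩
    have h1 := (h (r, a + (n - 1)) (mem_rowSeg.2 ⟨rfl, by simp, by simp only; omega⟩)).1
    obtain ⟨h2, h3, h4⟩ := mem_rowSeg.1 hc
    exact Prod.ext h2 (by simp only at h1 ⊢; omega)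
  · rintro rfl
    refine ⟨mem_rowSeg.2 ⟨rfl, by simp, by simp only; omega⟩, fun d hd => ?_⟩
    obtain ⟨h2, h3, h4⟩ := mem_rowSeg.1 hd
    simp only
    omega

/-! ### Spin-zero tilings of strips between stretched diagrams -/

/-- The skew shape `ν'/ν` has at most one cell in each column, phrased as: no cell has
another one directly above it. -/
def IsHorizontal (ν ν' : YoungDiagram) : Prop :=
  ∀ c ∈ ν'.cells \ ν.cells, c.1 = 0 ∨ (c.1 - 1, c.2) ∉ ν'.cells \ ν.cells

lemma mem_stretch_sdiff {n : ℕ} (hn : 1 ≤ n) {ν ν' : YoungDiagram} {c : Cell} :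
    c ∈ (stretch n hn ν').cells \ (stretch n hn ν).cells ↔
      (c.1, c.2 / n) ∈ ν'.cells \ ν.cells := by
  simp [Finset.mem_sdiff, YoungDiagram.mem_cells, mem_stretch]

/-- The northern condition for the tiling by blocks only tests the last cell of each block,
and the shape contains either all or none of the cells above a block. -/
lemma northernCond_block {n : ℕ} (hn : 1 ≤ n) {ν ν' : YoungDiagram} :
    NorthernCond ((stretch n hn ν').cells \ (stretch n hn ν).cells)
      ((ν'.cells \ ν.cells).image (block n)) ↔ IsHorizontal ν ν' := by
  have hdiv : ∀ k, (n * k + (n - 1)) / n = k := fun k =>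
    (div_eq_iff_block hn).1 ⟨by omega, by omega⟩
  simp only [NorthernCond, IsHorizontal, Finset.forall_mem_image, block, topRightCell_rowSeg hn,
    forall_eq, mem_stretch_sdiff hn, hdiv]

lemma isTilingOf_block {n : ℕ} (hn : 1 ≤ n) (ν ν' : YoungDiagram) :
    IsTilingOf n ((stretch n hn ν').cells \ (stretch n hn ν).cells)
      ((ν'.cells \ ν.cells).image (block n)) := by
  refine ⟨?_, ?_, ?_⟩
  · simp only [Finset.forall_mem_image]
    exact fun c _ => isRibbon_rowSeg _ _ _
  · intro A hA B hB hAB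
    obtain ⟨c, -, rfl⟩ := Finset.mem_image.1 (Finset.mem_coe.1 hA)
    obtain ⟨d, -, rfl⟩ := Finset.mem_image.1 (Finset.mem_coe.1 hB)
    refine Finset.disjoint_left.2 fun x hx hx' => hAB ?_
    rw [mem_block hn] at hx hx'
    rw [← hx, ← hx']
  · ext c
    rw [mem_stretch_sdiff hn]
    simp only [Finset.mem_biUnion, Finset.mem_image, id]
    constructor
    · rintro ⟨_, ⟨d, hd, rfl⟩, hc⟩
      rw [mem_block hn] at hc
      rwa [hc]
    · intro h
      exact ⟨_, ⟨_, h, rfl⟩, (mem_block hn).2 rfl⟩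

lemma tilingSpin_block (n : ℕ) (S : Finset Cell) : tilingSpin (S.image (block n)) = 0 := by
  refine Finset.sum_eq_zero fun R hR => ?_
  obtain ⟨c, -, rfl⟩ := Finset.mem_image.1 hR
  exact ribbonSpin_rowSeg _ _ _

/-- If `μ'/nν` is tiled by horizontal `n`-ribbons, every ribbon starts at a multiple of `n`:
the cell to its left, if any, is the last cell of a row of `nν` or of another ribbon of the tiling. -/
lemma dvd_start {n : ℕ} (hn : 1 ≤ n) {ν μ' : YoungDiagram} {T : Finset (Finset Cell)}
    (hT : IsTilingOf n (μ'.cells \ (stretch n hn ν).cells) T) (h0 : tilingSpin T = 0)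
    (r a : ℕ) (hR : rowSeg n r a ∈ T) : n ∣ a := by
  obtain ⟨hrib, hdisj, hcover⟩ := hT
  induction a using Nat.strong_induction_on with
  | _ a ih =>
  rcases Nat.eq_zero_or_pos a with rfl | ha
  · exact dvd_zero n
  have hmem : (r, a) ∈ rowSeg n r a := mem_rowSeg.2 ⟨rfl, le_rfl, by simp only; omega⟩
  have hcell : (r, a) ∈ μ'.cells \ (stretch n hn ν).cells := by
    rw [← hcover]
    exact Finset.mem_biUnion.2 ⟨_, hR, hmem⟩
  rw [Finset.mem_sdiff, YoungDiagram.mem_cells, YoungDiagram.mem_cells] at hcell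
  by_cases hleft : (r, a - 1) ∈ stretch n hn ν
  · by_contra hdvd
    apply hcell.2
    rw [mem_stretch] at hleft ⊢
    have : (a - 1) / n = a / n := by
      obtain ⟨b, rfl⟩ : ∃ b, a = b + 1 := ⟨a - 1, by omega⟩
      rw [Nat.succ_div_of_not_dvd hdvd, Nat.add_sub_cancel]
    rwa [this] at hleft
  · have hS : (r, a - 1) ∈ μ'.cells \ (stretch n hn ν).cells := by
      rw [Finset.mem_sdiff, YoungDiagram.mem_cells, YoungDiagram.mem_cells]
      exact ⟨μ'.up_left_mem le_rfl (by omega) hcell.1, hleft⟩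
    rw [← hcover] at hS
    obtain ⟨R', hR', hin⟩ := Finset.mem_biUnion.1 hS
    obtain ⟨r', a', rfl⟩ := eq_rowSeg_of_spin_zero hn (hrib R' hR')
      (Finset.sum_eq_zero_iff.1 h0 R' hR')
    obtain ⟨h1, h2, h3⟩ := mem_rowSeg.1 hin
    simp only at h1 h2 h3
    subst h1
    have hne : rowSeg n r a' ≠ rowSeg n r a := by
      intro h
      have hin' : (r, a - 1) ∈ rowSeg n r a := h ▸ hin
      have := (mem_rowSeg.1 hin').2.1
      simp only at this
      omega
    have hnot : (r, a) ∉ rowSeg n r a' := fun h =>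
      Finset.disjoint_left.1 (hdisj hR' hR hne) h hmem
    rw [mem_rowSeg] at hnot
    simp only [true_and, not_and, not_lt] at hnot
    have haa : a = a' + n := by
      have := hnot (by omega)
      omega
    rw [haa]
    exact (ih a' (by omega) hR').add (dvd_refl n)

/-- A diagram `μ'` obtained from `nν` by adding horizontal `n`-ribbons is stretched, and the
tiling is the one by blocks. -/
lemma spin_zero_tiling {n : ℕ} (hn : 1 ≤ n) {ν μ' : YoungDiagram} {T : Finset (Finset Cell)}
    (hle : stretch n hn ν ≤ μ')
    (hT : IsTilingOf n (μ'.cells \ (stretch n hn ν).cells) T) (h0 : tilingSpin T = 0) :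
    μ' = stretch n hn (contract n μ') ∧
      T = ((contract n μ').cells \ ν.cells).image (block n) := by
  have hblock : ∀ R ∈ T, ∃ c, R = block n c := by
    intro R hR
    obtain ⟨r, a, rfl⟩ := eq_rowSeg_of_spin_zero hn (hT.1 R hR)
      (Finset.sum_eq_zero_iff.1 h0 R hR)
    obtain ⟨k, rfl⟩ := dvd_start hn hT h0 r a hR
    exact ⟨(r, k), rfl⟩
  have htile : ∀ c ∈ μ'.cells \ (stretch n hn ν).cells, block n (c.1, c.2 / n) ∈ T := by
    intro c hc
    rw [← hT.2.2] at hc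
    obtain ⟨R, hR, hcR⟩ := Finset.mem_biUnion.1 hc
    obtain ⟨d, rfl⟩ := hblock R hR
    rw [id, mem_block hn] at hcR
    rwa [hcR]
  have hstart : ∀ r k, (r, n * k) ∈ μ'.cells \ (stretch n hn ν).cells ↔
      (r, k) ∈ (contract n μ').cells \ ν.cells := by
    intro r k
    rw [Finset.mem_sdiff, Finset.mem_sdiff, YoungDiagram.mem_cells, YoungDiagram.mem_cells,
      YoungDiagram.mem_cells, YoungDiagram.mem_cells, mem_contract hn, mul_mem_stretch]
  constructor
  · ext ⟨r, j⟩
    rw [YoungDiagram.mem_cells, YoungDiagram.mem_cells, mem_stretch, mem_contract hn]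
    constructor
    · exact μ'.up_left_mem le_rfl (Nat.mul_div_le j n)
    · intro h
      by_cases hν : (r, j) ∈ stretch n hn ν
      · exact hle hν
      have hS : (r, n * (j / n)) ∈ μ'.cells \ (stretch n hn ν).cells := by
        rw [mem_stretch] at hν
        rw [Finset.mem_sdiff, YoungDiagram.mem_cells, YoungDiagram.mem_cells, mul_mem_stretch]
        exact ⟨h, hν⟩
      have hb := htile _ hS
      rw [Nat.mul_div_cancel_left _ (show 0 < n by omega)] at hb
      have hj : (r, j) ∈ μ'.cells \ (stretch n hn ν).cells := by
        rw [← hT.2.2]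
        exact Finset.mem_biUnion.2 ⟨_, hb, (mem_block hn).2 rfl⟩
      exact (YoungDiagram.mem_cells _).1 (Finset.mem_sdiff.1 hj).1
  · ext R
    rw [Finset.mem_image]
    constructor
    · intro hR
      obtain ⟨⟨r, k⟩, rfl⟩ := hblock R hR
      refine ⟨(r, k), (hstart r k).1 ?_, rfl⟩
      rw [← hT.2.2]
      refine Finset.mem_biUnion.2 ⟨_, hR, ?_⟩
      rw [id, mem_block hn, Nat.mul_div_cancel_left _ (show 0 < n by omega)]
    · rintro ⟨⟨r, k⟩, hc, rfl⟩
      simpa [Nat.mul_div_cancel_left _ (show 0 < n by omega)] using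
        htile _ ((hstart r k).2 hc)

/-! ### Spin-zero tableaux as chains of horizontal strips -/

/-- Semistandard Young tableaux of shape `lam` with `N` letters, as chains of partitions with
successive differences horizontal strips. -/
def HChain (N : ℕ) (lam : YoungDiagram) : Type :=
  {ν : Fin (N + 1) → YoungDiagram // ν 0 = ⊥ ∧ ν (Fin.last N) = lam ∧
    ∀ i : Fin N, ν i.castSucc ≤ ν i.succ ∧ IsHorizontal (ν i.castSucc) (ν i.succ)}

/-- The multiplicity of the letter `i`. -/
def HChain.weight {N : ℕ} {lam : YoungDiagram} (C : HChain N lam) (i : Fin N) : ℕ :=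
  ((C.1 i.succ).cells \ (C.1 i.castSucc).cells).card

/-- The spin-zero `n`-ribbon tableau obtained by stretching every cell into a horizontal
`n`-ribbon. -/
def HChain.toTableau {n N : ℕ} (hn : 1 ≤ n) {lam : YoungDiagram} (C : HChain N lam) :
    RibbonTableau n N (stretch n hn lam) ⊥ where
  chain i := stretch n hn (C.1 i)
  chain_zero := by rw [C.2.1, stretch_bot]
  chain_last := by rw [C.2.2.1]
  chain_mono i := stretch_mono hn (C.2.2.2 i).1
  tiling i := ((C.1 i.succ).cells \ (C.1 i.castSucc).cells).image (block n)
  tiling_strip i := ⟨isTilingOf_block hn _ _, (northernCond_block hn).2 (C.2.2.2 i).2⟩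

lemma HChain.toTableau_spin {n N : ℕ} (hn : 1 ≤ n) {lam : YoungDiagram} (C : HChain N lam) :
    (C.toTableau hn).spin = 0 :=
  Finset.sum_eq_zero fun _ _ => tilingSpin_block _ _

lemma HChain.toTableau_card {n N : ℕ} (hn : 1 ≤ n) {lam : YoungDiagram} (C : HChain N lam)
    (i : Fin N) : ((C.toTableau hn).tiling i).card = C.weight i :=
  Finset.card_image_of_injective _ (block_injective hn)

lemma HChain.toTableau_injective {n N : ℕ} (hn : 1 ≤ n) {lam : YoungDiagram} :
    Function.Injective (HChain.toTableau (N := N) (lam := lam) hn) := by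
  intro C D h
  refine Subtype.ext (funext fun i => stretch_injective hn ?_)
  exact congrFun (congrArg RibbonTableau.chain h) i

lemma RibbonTableau.ext_data {n N : ℕ} {lam mu : YoungDiagram} {S T : RibbonTableau n N lam mu}
    (hc : S.chain = T.chain) (ht : S.tiling = T.tiling) : S = T := by
  cases S
  cases T
  simp only at hc ht
  subst hc ht
  rfl

lemma HChain.exists_toTableau {n N : ℕ} (hn : 1 ≤ n) {lam : YoungDiagram}
    (T : RibbonTableau n N (stretch n hn lam) ⊥) (h0 : T.spin = 0) :
    ∃ C : HChain N lam, C.toTableau hn = T := by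
  have hspin : ∀ i, tilingSpin (T.tiling i) = 0 := fun i =>
    Finset.sum_eq_zero_iff.1 h0 i (Finset.mem_univ i)
  have hchain : ∀ i, ∃ ν, T.chain i = stretch n hn ν := by
    intro i
    induction i using Fin.induction with
    | zero => exact ⟨⊥, by rw [T.chain_zero, stretch_bot]⟩
    | succ i ih =>
      obtain ⟨ν, hν⟩ := ih
      have hstrip := (T.tiling_strip i).1
      have hmono := T.chain_mono i
      rw [hν] at hstrip hmono
      exact ⟨_, (spin_zero_tiling hn hmono hstrip (hspin i)).1⟩
  choose ν hν using hchain
  have htil : ∀ i, T.tiling i =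
      ((ν i.succ).cells \ (ν i.castSucc).cells).image (block n) := by
    intro i
    have hstrip := (T.tiling_strip i).1
    have hmono := T.chain_mono i
    rw [hν i.castSucc] at hstrip hmono
    obtain ⟨h1, h2⟩ := spin_zero_tiling hn hmono hstrip (hspin i)
    rw [hν i.succ] at h1
    rw [h2, hν i.succ, ← stretch_injective hn h1]
  refine ⟨⟨ν, ?_, ?_, fun i => ⟨?_, ?_⟩⟩, RibbonTableau.ext_data ?_ ?_⟩
  · apply stretch_injective hn
    rw [← hν, T.chain_zero, stretch_bot]
  · apply stretch_injective hn
    rw [← hν, T.chain_last]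
  · apply le_of_stretch_le hn
    rw [← hν, ← hν]
    exact T.chain_mono i
  · rw [← northernCond_block hn, ← htil, ← hν, ← hν]
    exact (T.tiling_strip i).2
  · exact funext fun i => (hν i).symm
  · exact funext fun i => (htil i).symm

lemma card_spin_zero {n N : ℕ} (hn : 1 ≤ n) (lam : YoungDiagram) (w : Fin N → ℕ) :
    Nat.card {T : RibbonTableau n N (stretch n hn lam) ⊥ //
        (∀ i, (T.tiling i).card = w i) ∧ T.spin = 0} =
      Nat.card {C : HChain N lam // ∀ i, C.weight i = w i} := by
  symm
  refine Nat.card_eq_of_bijective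
    (fun C => ⟨C.1.toTableau hn, fun i => by rw [HChain.toTableau_card, C.2 i],
      C.1.toTableau_spin hn⟩) ⟨?_, ?_⟩
  · intro C D h
    exact Subtype.ext (HChain.toTableau_injective hn (congrArg Subtype.val h))
  · rintro ⟨T, hw, h0⟩
    obtain ⟨C, rfl⟩ := HChain.exists_toTableau hn T h0
    exact ⟨⟨C, fun i => by rw [← HChain.toTableau_card hn, hw]⟩, rfl⟩

/-- Every `1`-ribbon is a single cell. -/
lemma RibbonTableau.spin_one {N : ℕ} {lam mu : YoungDiagram} (T : RibbonTableau 1 N lam mu) :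
    T.spin = 0 := by
  refine Finset.sum_eq_zero fun i _ => Finset.sum_eq_zero fun R hR => ?_
  have h1 : R.card = 1 := ((T.tiling_strip i).1.1 R hR).1
  have h2 : (R.image Prod.fst).card ≤ R.card := Finset.card_image_le
  rw [ribbonSpin]
  omega

lemma RibbonTableau.chain_le {n N : ℕ} {lam mu : YoungDiagram} (T : RibbonTableau n N lam mu)
    (i : Fin (N + 1)) : T.chain i ≤ lam := by
  conv_rhs => rw [← T.chain_last]
  exact Fin.monotone_iff_le_succ.2 T.chain_mono (Fin.le_last i)

/-- Finiteness ensures that `ribbonFn` is a genuine sum, not the junk value of `∑ᶠ`. -/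
lemma RibbonTableau.finite (n N : ℕ) (lam mu : YoungDiagram) :
    Finite (RibbonTableau n N lam mu) := by
  have hsub : ∀ (T : RibbonTableau n N lam mu) i, T.tiling i ∈ lam.cells.powerset.powerset := by
    intro T i
    refine Finset.mem_powerset.2 fun R hR => Finset.mem_powerset.2 fun x hx => ?_
    have hx' : x ∈ (T.tiling i).biUnion id := Finset.mem_biUnion.2 ⟨R, hR, hx⟩
    rw [(T.tiling_strip i).1.2.2] at hx'
    exact T.chain_le _ (Finset.mem_sdiff.1 hx').1
  refine Finite.of_injective
    (β := (Fin (N + 1) → lam.cells.powerset) × (Fin N → lam.cells.powerset.powerset))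
    (fun T => (fun i => ⟨(T.chain i).cells, Finset.mem_powerset.2 (T.chain_le i)⟩,
      fun i => ⟨T.tiling i, hsub T i⟩)) ?_
  intro S T h
  rw [Prod.mk.injEq] at h
  refine RibbonTableau.ext_data (funext fun i => ?_) (funext fun i => ?_)
  · exact YoungDiagram.ext (congrArg Subtype.val (congrFun h.1 i))
  · exact congrArg Subtype.val (congrFun h.2 i)

lemma map_ribbonFn_stretch {n N : ℕ} (hn : 1 ≤ n) (lam : YoungDiagram) :
    MvPolynomial.map (Polynomial.evalRingHom (0 : ℤ)) (ribbonFn n N (stretch n hn lam) ⊥) =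
      ∑ᶠ C : HChain N lam, ∏ i : Fin N, MvPolynomial.X i ^ C.weight i := by
  have hfin := RibbonTableau.finite n N (stretch n hn lam) ⊥
  have hterm : ∀ T : RibbonTableau n N (stretch n hn lam) ⊥,
      MvPolynomial.map (Polynomial.evalRingHom (0 : ℤ)) (tableauTerm T) =
        if T.spin = 0 then ∏ i : Fin N, MvPolynomial.X i ^ (T.tiling i).card else 0 := by
    intro T
    split_ifs with h <;> simp [tableauTerm, h]
  have hrange : ∀ T : RibbonTableau n N (stretch n hn lam) ⊥,
      T ∈ Set.range (HChain.toTableau (N := N) (lam := lam) hn) ↔ T.spin = 0 :=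
    fun T => ⟨by rintro ⟨C, rfl⟩; exact C.toTableau_spin hn, HChain.exists_toTableau hn T⟩
  have hmap := (MvPolynomial.map (σ := Fin N)
    (Polynomial.evalRingHom (0 : ℤ))).toAddMonoidHom.map_finsum
    (f := fun T : RibbonTableau n N (stretch n hn lam) ⊥ => tableauTerm T) (Set.toFinite _)
  refine hmap.trans ?_
  calc _ = ∑ᶠ T ∈ Set.range (HChain.toTableau (N := N) (lam := lam) hn),
        ∏ i : Fin N, (MvPolynomial.X i : MvPolynomial (Fin N) ℤ) ^ (T.tiling i).card := by
        refine finsum_congr fun T => ?_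
        rw [finsum_eq_if]
        simp only [hrange]
        exact hterm T
    _ = _ := by
        rw [finsum_mem_range (HChain.toTableau_injective hn)]
        simp only [HChain.toTableau_card]

end

/-- for the stretched partition `nλ` (characterized by
`(i,j) ∈ nλ ↔ (i, j/n) ∈ λ`), spin-0 semistandard `n`-ribbon tableaux of shape `nλ` of any
given weight are equinumerous with semistandard Young tableaux of shape `λ` of that weight;
equivalently `𝒢_{nλ}(x;0) = s_λ(x)`. -/
theorem G_nlam_at_q_zero (n N : ℕ) (hn : 1 ≤ n) (hN : 1 ≤ N) (lam nlam : YoungDiagram)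
    (hnlam : ∀ c : ℕ × ℕ, c ∈ nlam ↔ (c.1, c.2 / n) ∈ lam) :
    (∀ w : Fin N → ℕ,
      Nat.card {T : RibbonTableau n N nlam ⊥ //
          (∀ i, (T.tiling i).card = w i) ∧ T.spin = 0} =
      Nat.card {T : RibbonTableau 1 N lam ⊥ // ∀ i, (T.tiling i).card = w i}) ∧
    MvPolynomial.map (Polynomial.evalRingHom (0 : ℤ)) (ribbonFn n N nlam ⊥) =
      MvPolynomial.map (Polynomial.evalRingHom (0 : ℤ)) (schurPoly N lam) := by
  obtain rfl : nlam = stretch n hn lam := by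
    ext c
    rw [YoungDiagram.mem_cells, YoungDiagram.mem_cells, hnlam, mem_stretch]
  refine ⟨fun w => ?_, ?_⟩
  · rw [card_spin_zero hn, ← card_spin_zero le_rfl, stretch_one]
    simp only [RibbonTableau.spin_one, and_true]
  · rw [map_ribbonFn_stretch hn, ← map_ribbonFn_stretch le_rfl, stretch_one, schurPoly]
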